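/- Conversely, if φ : I → ℝ is a smooth function on an open interval with φ' nowhere zero and 2·φ'''·φ' − 3·(φ'')² = 0 on I, then locally φ is a Möbius transformation, i.e., φ(t) = (a·t + c)/(b·t + d) for some a, b, c, d with a·d − b·c ≠ 0. -/

import Mathlib

/-!
The reciprocal `y = 1 / φ'` of the derivative turns the equation `2 φ''' φ' = 3 φ''²` into
`2 y y'' = y'²`. This makes `y'² / y` constant, hence `y'' = y'² / (2 y)` constant as well, so that
`y` is a quadratic polynomial of discriminant zero, i.e. a multiple of the square of an affine
function. Integrating `φ' = 1 / y` gives the fractional linear map with the same 2-jet as `φ` at a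
base point; its denominator has no zero because `y` has none.
-/

section RCLike

variable {𝕜 : Type*} [RCLike 𝕜] {s : Set 𝕜} {t₀ t : 𝕜}

theorem eqOn_of_hasDerivAt_of_eq {E : Type*} [NormedAddCommGroup E] [NormedSpace 𝕜 E]
    {f g f' : 𝕜 → E} (hs : IsOpen s) (hs' : IsPreconnected s)
    (hf : ∀ t ∈ s, HasDerivAt f (f' t) t) (hg : ∀ t ∈ s, HasDerivAt g (f' t) t)
    (ht₀ : t₀ ∈ s) (hfg : f t₀ = g t₀) : Set.EqOn f g s :=
  hs.eqOn_of_deriv_eq hs' (fun t ht => (hf t ht).differentiableAt.differentiableWithinAt)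
    (fun t ht => (hg t ht).differentiableAt.differentiableWithinAt)
    (fun t ht => (hf t ht).deriv.trans (hg t ht).deriv.symm) ht₀ hfg

section PerfectSquare

variable {y y' y'' : 𝕜 → 𝕜}

theorem deriv_sq_div_eq_of_two_mul_mul_eq_sq (hs : IsOpen s) (hs' : IsPreconnected s)
    (hy : ∀ t ∈ s, HasDerivAt y (y' t) t) (hy' : ∀ t ∈ s, HasDerivAt y' (y'' t) t)
    (hy₀ : ∀ t ∈ s, y t ≠ 0) (hode : ∀ t ∈ s, 2 * y t * y'' t = y' t ^ 2)
    (ht₀ : t₀ ∈ s) (ht : t ∈ s) : y' t ^ 2 / y t = y' t₀ ^ 2 / y t₀ := by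
  have hderiv : ∀ x ∈ s, HasDerivAt (fun x => y' x ^ 2 / y x) 0 x := fun x hx => by
    refine (((hy' x hx).fun_pow 2).fun_div (hy x hx) (hy₀ x hx)).congr_deriv
      (div_eq_zero_iff.mpr (Or.inl ?_))
    push_cast
    linear_combination y' x * hode x hx
  exact eqOn_of_hasDerivAt_of_eq hs hs' hderiv (fun x _ => hasDerivAt_const x _) ht₀ rfl ht

theorem four_mul_mul_eq_sq_of_two_mul_mul_eq_sq (hs : IsOpen s) (hs' : IsPreconnected s)
    (hy : ∀ t ∈ s, HasDerivAt y (y' t) t) (hy' : ∀ t ∈ s, HasDerivAt y' (y'' t) t)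
    (hy₀ : ∀ t ∈ s, y t ≠ 0) (hode : ∀ t ∈ s, 2 * y t * y'' t = y' t ^ 2)
    (ht₀ : t₀ ∈ s) (ht : t ∈ s) :
    4 * y t₀ * y t = (2 * y t₀ + y' t₀ * (t - t₀)) ^ 2 := by
  have hne := hy₀ t₀ ht₀
  set k := y' t₀ ^ 2 / y t₀ with hk
  have hy''_const : ∀ x ∈ s, y'' x = k / 2 := fun x hx => by
    have hx₀ := hy₀ x hx
    rw [hk, ← deriv_sq_div_eq_of_two_mul_mul_eq_sq hs hs' hy hy' hy₀ hode ht₀ hx, ← hode x hx]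
    field_simp
  have hshift : ∀ x, HasDerivAt (fun x => x - t₀) 1 x := fun x => (hasDerivAt_id x).sub_const t₀
  have hy'_affine : Set.EqOn y' (fun x => y' t₀ + k / 2 * (x - t₀)) s :=
    eqOn_of_hasDerivAt_of_eq hs hs' hy'
      (fun x hx => (((hshift x).const_mul (k / 2)).const_add (y' t₀)).congr_deriv
        (by rw [hy''_const x hx, mul_one])) ht₀ (by simp)
  have hy_quadratic :
      Set.EqOn y (fun x => y t₀ + (y' t₀ * (x - t₀) + k / 4 * (x - t₀) ^ 2)) s := by
    refine eqOn_of_hasDerivAt_of_eq hs hs' hy (fun x hx => ?_) ht₀ (by simp)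
    refine ((((hshift x).const_mul (y' t₀)).fun_add
      (((hshift x).fun_pow 2).const_mul (k / 4))).const_add (y t₀)).congr_deriv ?_
    rw [hy'_affine hx]
    ring
  rw [hy_quadratic ht, hk]
  field_simp
  ring

end PerfectSquare

section Schwarzian

variable {φ φ₁ φ₂ φ₃ : 𝕜 → 𝕜}

theorem deriv_mul_sq_eq_of_schwarzian_eq_zero (hs : IsOpen s) (hs' : IsPreconnected s)
    (hφ₁ : ∀ t ∈ s, HasDerivAt φ₁ (φ₂ t) t) (hφ₂ : ∀ t ∈ s, HasDerivAt φ₂ (φ₃ t) t)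
    (hφ₁_ne : ∀ t ∈ s, φ₁ t ≠ 0) (hS : ∀ t ∈ s, 2 * φ₃ t * φ₁ t - 3 * φ₂ t ^ 2 = 0)
    (ht₀ : t₀ ∈ s) (ht : t ∈ s) :
    φ₁ t * (2 * φ₁ t₀ - φ₂ t₀ * (t - t₀)) ^ 2 = 4 * φ₁ t₀ ^ 3 := by
  have hinv : ∀ x ∈ s, HasDerivAt (fun x => (φ₁ x)⁻¹) (-φ₂ x / φ₁ x ^ 2) x :=
    fun x hx => (hφ₁ x hx).fun_inv (hφ₁_ne x hx)
  have hinv' : ∀ x ∈ s, HasDerivAt (fun x => -φ₂ x / φ₁ x ^ 2)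
      (φ₂ x ^ 2 / (2 * φ₁ x ^ 3)) x := fun x hx => by
    have hx₀ := hφ₁_ne x hx
    refine ((hφ₂ x hx).fun_neg.fun_div ((hφ₁ x hx).fun_pow 2)
      (pow_ne_zero 2 hx₀)).congr_deriv ?_
    field_simp
    push_cast
    linear_combination -φ₁ x * hS x hx
  have hsquare := four_mul_mul_eq_sq_of_two_mul_mul_eq_sq hs hs' hinv hinv'
    (fun x hx => inv_ne_zero (hφ₁_ne x hx)) (fun x hx => by field_simp [hφ₁_ne x hx]) ht₀ ht
  have ht₀_ne := hφ₁_ne t₀ ht₀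
  have ht_ne := hφ₁_ne t ht
  field_simp at hsquare
  linear_combination -hsquare

theorem eq_moebius_of_schwarzian_eq_zero (hs : IsOpen s) (hs' : IsPreconnected s)
    (hφ : ∀ t ∈ s, HasDerivAt φ (φ₁ t) t) (hφ₁ : ∀ t ∈ s, HasDerivAt φ₁ (φ₂ t) t)
    (hφ₂ : ∀ t ∈ s, HasDerivAt φ₂ (φ₃ t) t) (hφ₁_ne : ∀ t ∈ s, φ₁ t ≠ 0)
    (hS : ∀ t ∈ s, 2 * φ₃ t * φ₁ t - 3 * φ₂ t ^ 2 = 0) (ht₀ : t₀ ∈ s) (ht : t ∈ s) :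
    2 * φ₁ t₀ - φ₂ t₀ * (t - t₀) ≠ 0 ∧
      φ t = φ t₀ + 2 * φ₁ t₀ ^ 2 * (t - t₀) / (2 * φ₁ t₀ - φ₂ t₀ * (t - t₀)) := by
  have hsquare : ∀ x ∈ s, φ₁ x * (2 * φ₁ t₀ - φ₂ t₀ * (x - t₀)) ^ 2 = 4 * φ₁ t₀ ^ 3 :=
    fun x hx => deriv_mul_sq_eq_of_schwarzian_eq_zero hs hs' hφ₁ hφ₂ hφ₁_ne hS ht₀ hx
  have hden : ∀ x ∈ s, 2 * φ₁ t₀ - φ₂ t₀ * (x - t₀) ≠ 0 := fun x hx h => by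
    have := hsquare x hx
    simp [h, hφ₁_ne t₀ ht₀] at this
  have hmoebius : ∀ x ∈ s, HasDerivAt
      (fun x => φ t₀ + 2 * φ₁ t₀ ^ 2 * (x - t₀) / (2 * φ₁ t₀ - φ₂ t₀ * (x - t₀)))
      (φ₁ x) x := fun x hx => by
    have hshift : HasDerivAt (fun x => x - t₀) 1 x := (hasDerivAt_id x).sub_const t₀
    refine (((hshift.const_mul (2 * φ₁ t₀ ^ 2)).fun_div
      ((hshift.const_mul (φ₂ t₀)).const_sub (2 * φ₁ t₀)) (hden x hx)).const_add
        (φ t₀)).congr_deriv ?_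
    rw [div_eq_iff (pow_ne_zero 2 (hden x hx)), hsquare x hx]
    ring
  exact ⟨hden t ht, eqOn_of_hasDerivAt_of_eq hs hs' hφ hmoebius ht₀ (by simp) ht⟩

theorem schwarzian_zero_implies_moebius_general (hs : IsOpen s) (hs' : IsPreconnected s)
    (hφ₁ : DifferentiableOn 𝕜 (deriv φ) s) (hφ₂ : DifferentiableOn 𝕜 (deriv (deriv φ)) s)
    (hφ₁_ne : ∀ t ∈ s, deriv φ t ≠ 0)
    (hS : ∀ t ∈ s,
      2 * deriv (deriv (deriv φ)) t * deriv φ t - 3 * (deriv (deriv φ) t) ^ 2 = 0) :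
    ∃ a b c d : 𝕜, a * d - b * c ≠ 0 ∧
      ∀ t ∈ s, b * t + d ≠ 0 ∧ φ t = (a * t + c) / (b * t + d) := by
  obtain rfl | ⟨t₀, ht₀⟩ := s.eq_empty_or_nonempty
  · exact ⟨1, 0, 0, 1, by simp, by simp⟩
  set u := deriv φ t₀
  set v := deriv (deriv φ) t₀
  have hu₀ : u ≠ 0 := hφ₁_ne t₀ ht₀
  refine ⟨2 * u ^ 2 - φ t₀ * v, -v, φ t₀ * (2 * u + v * t₀) - 2 * u ^ 2 * t₀, 2 * u + v * t₀,
    ?_, fun t ht => ?_⟩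
  · have hdet : (2 * u ^ 2 - φ t₀ * v) * (2 * u + v * t₀)
        - -v * (φ t₀ * (2 * u + v * t₀) - 2 * u ^ 2 * t₀) = 4 * u ^ 3 := by ring
    rw [hdet]
    simp [hu₀]
  · obtain ⟨hden, hφt⟩ := eq_moebius_of_schwarzian_eq_zero hs hs'
      (fun x hx => (differentiableAt_of_deriv_ne_zero (hφ₁_ne x hx)).hasDerivAt)
      (fun x hx => (hφ₁.differentiableAt (hs.mem_nhds hx)).hasDerivAt)
      (fun x hx => (hφ₂.differentiableAt (hs.mem_nhds hx)).hasDerivAt) hφ₁_ne hS ht₀ ht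
    have hden_eq : -v * t + (2 * u + v * t₀) = 2 * u - v * (t - t₀) := by ring
    rw [hden_eq, hφt, add_div' _ _ _ hden]
    exact ⟨hden, by ring⟩

end Schwarzian

end RCLike

/-- If `φ` is smooth on an open interval `I` with `φ'` nowhere zero and
`2·φ'''·φ' − 3·(φ'')² = 0` on `I`, then around each point of `I`, `φ` is a Möbius
transformation `t ↦ (a·t + c)/(b·t + d)` with `a·d − b·c ≠ 0`. -/
theorem schwarzian_zero_implies_moebius (p q : ℝ) (φ : ℝ → ℝ)
    (hφ : ContDiffOn ℝ (⊤ : ℕ∞) φ (Set.Ioo p q))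
    (hφ' : ∀ t ∈ Set.Ioo p q, deriv φ t ≠ 0)
    (hS : ∀ t ∈ Set.Ioo p q,
      2 * deriv (deriv (deriv φ)) t * deriv φ t - 3 * (deriv (deriv φ) t) ^ 2 = 0) :
    ∀ t₀ ∈ Set.Ioo p q, ∃ ε > 0, ∃ a b c d : ℝ, a * d - b * c ≠ 0 ∧
      ∀ t, |t - t₀| < ε → φ t = (a * t + c) / (b * t + d) := by
  intro t₀ ht₀
  have hφ_deriv : ContDiffOn ℝ (⊤ : ℕ∞) (deriv φ) (Set.Ioo p q) :=
    hφ.deriv_of_isOpen isOpen_Ioo (by simp)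
  have hφ_deriv2 : ContDiffOn ℝ (⊤ : ℕ∞) (deriv (deriv φ)) (Set.Ioo p q) :=
    hφ_deriv.deriv_of_isOpen isOpen_Ioo (by simp)
  obtain ⟨a, b, c, d, hdet, h⟩ := schwarzian_zero_implies_moebius_general isOpen_Ioo
    isPreconnected_Ioo (hφ_deriv.differentiableOn (by simp)) (hφ_deriv2.differentiableOn (by simp))
    hφ' hS
  obtain ⟨ε, hε, hball⟩ := Metric.isOpen_iff.mp isOpen_Ioo t₀ ht₀
  exact ⟨ε, hε, a, b, c, d, hdet, fun t ht => (h t (hball ht)).2⟩
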